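/- For every integer k ≥ 4 and every n ≥ 2k, the graph K1∇(K_{2,2k−3} ∪ (n−2k)K₁), obtained by joining a new vertex to the disjoint union of K_{2,2k−3} and n−2k isolated vertices, is a simple graph on n vertices with a dominating vertex, with exactly n+4k−7 edges, and containing no k pairwise edge-disjoint cycles; in particular, it has more than n+3k−4 edges. -/

import Mathlib

open scoped Classical

namespace PaperEDC

/-- `G` contains `m` pairwise edge-disjoint cycles. -/
def HasEDC {V : Type*} (G : SimpleGraph V) (m : ℕ) : Prop :=
  ∃ c : Fin m → Σ v : V, G.Walk v v,
    (∀ i, (c i).2.IsCycle) ∧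
    ∀ i j, i ≠ j → ∀ e ∈ (c i).2.edges, e ∉ (c j).2.edges

/-- `φ(G)`: the maximum number of pairwise edge-disjoint cycles in `G`. -/
noncomputable def phi {V : Type*} (G : SimpleGraph V) : ℕ := sSup {m | HasEDC G m}

/-- `K₁ ∇ H`: the join of a single new vertex with `H`. -/
def joinK1 {V : Type*} (H : SimpleGraph V) : SimpleGraph (Option V) :=
  SimpleGraph.fromRel fun a b => a = none ∨ ∃ u v, a = some u ∧ b = some v ∧ H.Adj u v

/-- `t(G)`: the number of triangles of `G`. -/
noncomputable def triCount {V : Type*} (G : SimpleGraph V) : ℕ :=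
  Nat.card {s : Finset V // G.IsNClique 3 s}

/-- A triangle-cactus: a connected graph in which every edge lies on a cycle and every
cycle is a triangle. -/
def IsTriangleCactus {V : Type*} (G : SimpleGraph V) : Prop :=
  G.Connected ∧
  (∀ e ∈ G.edgeSet, ∃ (v : V) (w : G.Walk v v), w.IsCycle ∧ e ∈ w.edges) ∧
  ∀ (v : V) (w : G.Walk v v), w.IsCycle → w.length = 3

/-- `e(G)`: the number of edges of `G`. -/
noncomputable def ecard {V : Type*} (G : SimpleGraph V) : ℕ := Nat.card G.edgeSet

/-- `ρ(G)`: the spectral radius (largest adjacency eigenvalue) of `G`. -/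
noncomputable def specRad {V : Type*} [Fintype V] (G : SimpleGraph V) : ℝ :=
  sSup {x : ℝ | ∃ f : V → ℝ, f ≠ 0 ∧ ∀ v : V, ∑ u : V, (if G.Adj v u then f u else 0) = x * f v}

/-- The disjoint union `K_{2,2k-3} ∪ (n-2k)K₁`. -/
def completeBipartitePlusIsolated (k n : ℕ) :
    SimpleGraph ((Fin 2 ⊕ Fin (2 * k - 3)) ⊕ Fin (n - 2 * k)) :=
  SimpleGraph.fromRel fun a b =>
    ∃ x y, a = Sum.inl (Sum.inl x) ∧ b = Sum.inl (Sum.inr y)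

/-!
Proof idea for the bound on edge-disjoint cycles. Suppose that every edge that is not a bridge lies
in `F` or meets `B`, where every vertex of `B` has degree at most three. A cycle has at least three
edges and meets each vertex in at most two of them, so it uses at least two elements of `B` and `F`
altogether. Two cycles through a common vertex of `B` would need four edges there, so edge-disjoint
cycles use different elements, and there are at most `(|B| + |F|) / 2` of them. In
`K₁ ∇ (K_{2,2k-3} ∪ (n-2k)K₁)` take for `B` the part of size `2k-3` and for `F` the two edges from
the new vertex to the part of size two; this gives fewer than `k` cycles.
-/

section Cycles

open SimpleGraph

variable {V : Type*} {G : SimpleGraph V}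

lemma encard_neighborSet_toSubgraph_of_isCycle {u v : V} {w : G.Walk u u} (hw : w.IsCycle)
    (hv : v ∈ w.support) : (w.toSubgraph.neighborSet v).encard = 2 := by
  have hcard := hw.ncard_neighborSet_toSubgraph_eq_two hv
  have hfin := Set.finite_of_ncard_ne_zero (hcard.trans_ne two_ne_zero)
  rw [← hfin.cast_ncard_eq, hcard, Nat.cast_ofNat]

lemma four_le_encard_neighborSet_of_edges_disjoint {u₁ u₂ v : V} {w₁ : G.Walk u₁ u₁}
    {w₂ : G.Walk u₂ u₂} (hw₁ : w₁.IsCycle) (hw₂ : w₂.IsCycle) (hd : w₁.edges.Disjoint w₂.edges)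
    (hv₁ : v ∈ w₁.support) (hv₂ : v ∈ w₂.support) : 4 ≤ (G.neighborSet v).encard := by
  have hdisj : Disjoint (w₁.toSubgraph.neighborSet v) (w₂.toSubgraph.neighborSet v) :=
    Set.disjoint_left.2 fun x hx₁ hx₂ =>
      hd (Walk.adj_toSubgraph_iff_mem_edges.1 hx₁) (Walk.adj_toSubgraph_iff_mem_edges.1 hx₂)
  calc (4 : ℕ∞) = 2 + 2 := by norm_num
    _ = (w₁.toSubgraph.neighborSet v ∪ w₂.toSubgraph.neighborSet v).encard := by
      rw [Set.encard_union_eq hdisj, encard_neighborSet_toSubgraph_of_isCycle hw₁ hv₁,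
        encard_neighborSet_toSubgraph_of_isCycle hw₂ hv₂]
    _ ≤ (G.neighborSet v).encard := Set.encard_le_encard <|
      Set.union_subset (Subgraph.neighborSet_subset _ v) (Subgraph.neighborSet_subset _ v)

lemma card_filter_mem_edges_le_two {u : V} {w : G.Walk u u} (hw : w.IsCycle) (v : V) :
    (w.edges.toFinset.filter (v ∈ ·)).card ≤ 2 := by
  by_cases hv : v ∈ w.support
  · have hsub : (↑(w.edges.toFinset.filter (v ∈ ·)) : Set (Sym2 V)) ⊆
        (s(v, ·)) '' w.toSubgraph.neighborSet v := by
      intro e he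
      obtain ⟨hew, x, rfl⟩ := Finset.mem_filter.1 he
      exact ⟨x, Walk.adj_toSubgraph_iff_mem_edges.2 (List.mem_toFinset.1 hew), rfl⟩
    have hle := (Set.encard_le_encard hsub).trans (Set.encard_image_le _ _)
    rw [encard_neighborSet_toSubgraph_of_isCycle hw hv, Set.encard_coe_eq_coe_finsetCard] at hle
    exact_mod_cast hle
  · rw [Finset.filter_false_of_mem fun e he hve =>
      hv (w.mem_support_of_mem_edges (List.mem_toFinset.1 he) hve)]
    simp

lemma two_le_card_add_card_of_isCycle {u : V} {w : G.Walk u u} (hw : w.IsCycle) {B : Finset V}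
    {F : Finset (Sym2 V)} (hcover : ∀ e ∈ w.edges, e ∈ F ∨ ∃ b ∈ B, b ∈ e) :
    2 ≤ B.card + F.card := by
  have hsub : w.edges.toFinset ⊆ F ∪ B.biUnion fun b => w.edges.toFinset.filter (b ∈ ·) := by
    intro e he
    simpa [List.mem_toFinset.1 he] using hcover e (List.mem_toFinset.1 he)
  have hlength : w.edges.toFinset.card = w.length := by
    rw [List.toFinset_card_of_nodup hw.edges_nodup, Walk.length_edges]
  have hB : (B.biUnion fun b => w.edges.toFinset.filter (b ∈ ·)).card ≤ B.card * 2 :=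
    Finset.card_biUnion_le_card_mul _ _ _ fun b _ => card_filter_mem_edges_le_two hw b
  have hthree : 3 ≤ F.card + B.card * 2 :=
    calc 3 ≤ w.length := hw.three_le_length
      _ = w.edges.toFinset.card := hlength.symm
      _ ≤ F.card + B.card * 2 := (Finset.card_le_card hsub).trans <|
        (Finset.card_union_le _ _).trans (Nat.add_le_add_left hB _)
  omega

lemma isBridge_of_neighborSet_subsingleton {u v : V} (huv : G.Adj u v)
    (hv : (G.neighborSet v).Subsingleton) : G.IsBridge s(u, v) := by
  refine (isBridge_iff_forall_cycle_notMem huv).2 fun x w hw he => ?_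
  have hle := (Set.encard_le_encard (w.toSubgraph.neighborSet_subset v)).trans
    (Set.encard_le_one_iff_subsingleton.2 hv)
  rw [encard_neighborSet_toSubgraph_of_isCycle hw (w.snd_mem_support_of_mem_edges he)] at hle
  exact absurd hle (by decide)

lemma sum_card_filter_le {ι α : Type*} [Fintype ι] (s : Finset α) (P : ι → α → Prop)
    [∀ i, DecidablePred (P i)] (hP : ∀ a ∈ s, ∀ i j, P i a → P j a → i = j) :
    ∑ i, (s.filter (P i)).card ≤ s.card := by
  rw [← Finset.card_biUnion]
  · exact Finset.card_le_card (Finset.biUnion_subset.2 fun i _ => Finset.filter_subset _ _)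
  · intro i _ j _ hij
    exact Finset.disjoint_filter.2 fun a ha hi hj => hij (hP a ha i j hi hj)

theorem HasEDC.two_mul_le_card_add_card {m : ℕ} (h : HasEDC G m) {B : Finset V}
    {F : Finset (Sym2 V)} (hB : ∀ b ∈ B, (G.neighborSet b).encard ≤ 3)
    (hcover : ∀ e ∈ G.edgeSet, ¬ G.IsBridge e → e ∈ F ∨ ∃ b ∈ B, b ∈ e) :
    2 * m ≤ B.card + F.card := by
  obtain ⟨c, hc, hd⟩ := h
  let usedB (i : Fin m) : Finset V := B.filter (· ∈ (c i).2.support)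
  let usedF (i : Fin m) : Finset (Sym2 V) := F.filter (· ∈ (c i).2.edges)
  have hused (i : Fin m) : 2 ≤ (usedB i).card + (usedF i).card := by
    refine two_le_card_add_card_of_isCycle (hc i) fun e he => ?_
    have hbridge : ¬ G.IsBridge e := fun hb => hb.notMem_edges_of_isCycle (hc i) he
    rcases hcover e ((c i).2.edges_subset_edgeSet he) hbridge with heF | ⟨b, hb, hbe⟩
    · exact .inl (Finset.mem_filter.2 ⟨heF, he⟩)
    · exact .inr ⟨b, Finset.mem_filter.2 ⟨hb, (c i).2.mem_support_of_mem_edges he hbe⟩, hbe⟩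
  have hsumB : ∑ i, (usedB i).card ≤ B.card := by
    refine sum_card_filter_le B (fun i b => b ∈ (c i).2.support) fun b hb i j hi hj =>
      by_contra fun hij => ?_
    have hfour := four_le_encard_neighborSet_of_edges_disjoint (hc i) (hc j) (hd i j hij) hi hj
    exact absurd (hfour.trans (hB b hb)) (by decide)
  have hsumF : ∑ i, (usedF i).card ≤ F.card :=
    sum_card_filter_le F (fun i e => e ∈ (c i).2.edges) fun e _ i j hi hj =>
      by_contra fun hij => hd i j hij e hi hj
  calc 2 * m = ∑ _i : Fin m, 2 := by simp [mul_comm]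
    _ ≤ ∑ i, ((usedB i).card + (usedF i).card) := Finset.sum_le_sum fun i _ => hused i
    _ = ∑ i, (usedB i).card + ∑ i, (usedF i).card := Finset.sum_add_distrib
    _ ≤ B.card + F.card := Nat.add_le_add hsumB hsumF

end Cycles

section Join

open SimpleGraph

variable {V : Type*} {H : SimpleGraph V}

@[simp]
lemma joinK1_adj_none_some (v : V) : (joinK1 H).Adj none (some v) := by
  simp [joinK1]

@[simp]
lemma joinK1_adj_some_some {u v : V} : (joinK1 H).Adj (some u) (some v) ↔ H.Adj u v := by
  simpa [joinK1, H.adj_comm v u] using H.ne_of_adj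

lemma neighborSet_joinK1_some (v : V) :
    (joinK1 H).neighborSet (some v) = insert none (some '' H.neighborSet v) := by
  ext (_ | u)
  · simpa using (joinK1_adj_none_some v).symm
  · simp

lemma edgeSet_joinK1 :
    (joinK1 H).edgeSet = Set.range (fun v => s(none, some v)) ∪ Sym2.map some '' H.edgeSet := by
  ext e
  constructor
  · induction e with | _ x y
    intro hxy
    rcases x with _ | u <;> rcases y with _ | v
    · exact absurd hxy (joinK1 H).irrefl
    · exact .inl ⟨v, rfl⟩
    · exact .inl ⟨u, Sym2.eq_swap⟩
    · exact .inr ⟨s(u, v), joinK1_adj_some_some.1 hxy, rfl⟩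
  · rintro (⟨v, rfl⟩ | ⟨⟨u, v⟩, huv, rfl⟩)
    · exact joinK1_adj_none_some v
    · exact joinK1_adj_some_some.2 huv

lemma ecard_joinK1 [Finite V] : ecard (joinK1 H) = Nat.card V + ecard H := by
  have hdisj : Disjoint (Set.range fun v => s(none, some v)) (Sym2.map some '' H.edgeSet) := by
    rw [Set.disjoint_left]
    rintro _ ⟨v, rfl⟩ ⟨e, -, he⟩
    have hnone : none ∈ Sym2.map some e := he ▸ Sym2.mem_mk_left _ _
    simp at hnone
  have hinj : Function.Injective fun v : V => s(none, some v) := fun u v huv => by simpa using huv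
  simp only [ecard, Nat.card_coe_set_eq]
  rw [edgeSet_joinK1, Set.ncard_union_eq hdisj, Set.ncard_range_of_injective hinj,
    Set.ncard_image_of_injective _ (Sym2.map.injective (Option.some_injective V))]

end Join

section CompleteBipartite

open SimpleGraph

variable {α β γ : Type*}

lemma encard_neighborSet_joinK1_completeBipartiteGraph_right (b : β) :
    ((joinK1 (completeBipartiteGraph α β ⊕g (⊥ : SimpleGraph γ))).neighborSet
      (some (.inl (.inr b)))).encard = ENat.card α + 1 := by
  have hright : (completeBipartiteGraph α β).neighborSet (.inr b) = Sum.inl '' Set.univ := by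
    ext (a | b') <;> simp
  rw [neighborSet_joinK1_some, Set.encard_insert_of_notMem (by simp),
    (Option.some_injective _).encard_image, neighborSet_sum_inl, Sum.inl_injective.encard_image,
    hright, Sum.inl_injective.encard_image, Set.encard_univ]

lemma exists_inr_mem_of_mem_edgeSet_completeBipartiteGraph_sum_bot {e : Sym2 ((α ⊕ β) ⊕ γ)}
    (he : e ∈ (completeBipartiteGraph α β ⊕g (⊥ : SimpleGraph γ)).edgeSet) :
    ∃ b : β, .inl (.inr b) ∈ e := by
  induction e with | _ x y
  rcases x with (a | b) | c <;> rcases y with (a' | b') | c' <;> simp_all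

lemma isBridge_joinK1_sum_bot (H : SimpleGraph α) (c : γ) :
    (joinK1 (H ⊕g (⊥ : SimpleGraph γ))).IsBridge s(none, some (.inr c)) := by
  refine isBridge_of_neighborSet_subsingleton (joinK1_adj_none_some _) ?_
  rw [neighborSet_joinK1_some, neighborSet_sum_inr]
  simp

theorem HasEDC.two_mul_le_of_joinK1_completeBipartiteGraph [Fintype α] [Fintype β] {m : ℕ}
    (h : HasEDC (joinK1 (completeBipartiteGraph α β ⊕g (⊥ : SimpleGraph γ))) m)
    (hα : Fintype.card α ≤ 2) : 2 * m ≤ Fintype.card β + Fintype.card α := by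
  let B : Finset (Option ((α ⊕ β) ⊕ γ)) := Finset.univ.image fun b => some (.inl (.inr b))
  let F : Finset (Sym2 (Option ((α ⊕ β) ⊕ γ))) :=
    Finset.univ.image fun a => s(none, some (.inl (.inl a)))
  refine (h.two_mul_le_card_add_card (B := B) (F := F) ?_ ?_).trans
    (Nat.add_le_add Finset.card_image_le Finset.card_image_le)
  · intro v hv
    obtain ⟨b, -, rfl⟩ := Finset.mem_image.1 hv
    rw [encard_neighborSet_joinK1_completeBipartiteGraph_right, ENat.card_eq_coe_fintype_card]
    exact_mod_cast Nat.succ_le_succ hα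
  · intro e he hbridge
    rw [edgeSet_joinK1] at he
    rcases he with ⟨(a | b) | c, rfl⟩ | ⟨e, he, rfl⟩
    · exact .inl (Finset.mem_image_of_mem _ (Finset.mem_univ a))
    · exact .inr ⟨_, Finset.mem_image_of_mem _ (Finset.mem_univ b), Sym2.mem_mk_right _ _⟩
    · exact absurd (isBridge_joinK1_sum_bot _ c) hbridge
    · obtain ⟨b, hb⟩ := exists_inr_mem_of_mem_edgeSet_completeBipartiteGraph_sum_bot he
      exact .inr ⟨_, Finset.mem_image_of_mem _ (Finset.mem_univ b), Sym2.mem_map.2 ⟨_, hb, rfl⟩⟩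

lemma ecard_completeBipartiteGraph_sum_bot :
    ecard (completeBipartiteGraph α β ⊕g (⊥ : SimpleGraph γ)) = Nat.card α * Nat.card β := by
  have hinj : Function.Injective fun x : α × β => s(Sum.inl x.1, Sum.inr x.2) := by
    grind [Function.Injective]
  rw [ecard, Nat.card_congr edgeSetSumEquiv, edgeSet_bot, Nat.card_congr (Equiv.sumEmpty _ _),
    edgeSet_completeBipartiteGraph, Nat.card_range_of_injective hinj, Nat.card_prod]

lemma completeBipartitePlusIsolated_eq_sum (k n : ℕ) :
    completeBipartitePlusIsolated k n =
      completeBipartiteGraph (Fin 2) (Fin (2 * k - 3)) ⊕g ⊥ := by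
  ext ((a | b) | c) ((a' | b') | c') <;>
    simp [completeBipartitePlusIsolated, -Fin.exists_fin_two]

end CompleteBipartite

/-- For `k ≥ 4` and `n ≥ 2k`, the graph `K₁ ∇ (K_{2,2k-3} ∪ (n-2k)K₁)` has `n` vertices,
a dominating vertex, exactly `n + 4k - 7` edges, and contains no `k` pairwise
edge-disjoint cycles; in particular it has more than `n + 3k - 4` edges. -/
theorem joinK1_completeBipartitePlus_props (k n : ℕ) (hk : 4 ≤ k) (hn : 2 * k ≤ n) :
    Fintype.card (Option ((Fin 2 ⊕ Fin (2 * k - 3)) ⊕ Fin (n - 2 * k))) = n ∧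
    (∃ u, ∀ v, v ≠ u → (joinK1 (completeBipartitePlusIsolated k n)).Adj u v) ∧
    ecard (joinK1 (completeBipartitePlusIsolated k n)) = n + 4 * k - 7 ∧
    ¬ HasEDC (joinK1 (completeBipartitePlusIsolated k n)) k ∧
    n + 3 * k - 4 < ecard (joinK1 (completeBipartitePlusIsolated k n)) := by
  have hcard : Fintype.card (Option ((Fin 2 ⊕ Fin (2 * k - 3)) ⊕ Fin (n - 2 * k))) = n := by
    simp only [Fintype.card_option, Fintype.card_sum, Fintype.card_fin]
    omega
  have hedges : ecard (joinK1 (completeBipartitePlusIsolated k n)) = n + 4 * k - 7 := by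
    rw [Fintype.card_option] at hcard
    rw [ecard_joinK1, completeBipartitePlusIsolated_eq_sum, ecard_completeBipartiteGraph_sum_bot,
      Nat.card_eq_fintype_card, Nat.card_fin, Nat.card_fin]
    omega
  have hcycles : ¬ HasEDC (joinK1 (completeBipartitePlusIsolated k n)) k := fun h => by
    rw [completeBipartitePlusIsolated_eq_sum] at h
    have hle := h.two_mul_le_of_joinK1_completeBipartiteGraph (Fintype.card_fin 2).le
    rw [Fintype.card_fin, Fintype.card_fin] at hle
    omega
  refine ⟨hcard, ⟨none, fun v hv => ?_⟩, hedges, hcycles, by omega⟩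
  obtain ⟨v, rfl⟩ := Option.ne_none_iff_exists'.1 hv
  exact joinK1_adj_none_some v

end PaperEDC
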